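/- arXiv:2206.04492 — 2 statements merged into one kernel-verified Lean document; each statement's English description precedes it below -/
import Mathlib

section
/- Let d' ≥ 1 and let Y : ℝ^{d'} → ℝ be a smooth Morse function (every critical point of Y is nondegenerate) which is bounded from below and satisfies |∇Y(x)| ≥ 1/C for |x| > C, for some constant C > 0. Let m and m' be two distinct local minima of Y. Then the set A = {a ∈ ℝ : m and m' lie in two different connected components of {Y < a}} is nonempty and bounded above, so σ := sup A is well defined; the open set {Y < σ} has at least two distinct connected components Ω ∋ m and Ω' ∋ m'; and there exists a connected component Ω'' of {Y < σ} with Ω'' ≠ Ω such that the closure of Ω meets the closure of Ω'', and every point of closure(Ω) ∩ closure(Ω'') is a nondegenerate critical point of Y of index 1 with critical value σ. -/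
/-- The Hessian of `Y` at `x`, as a continuous bilinear form. -/
noncomputable def hessianAt {E : Type*} [NormedAddCommGroup E] [NormedSpace ℝ E]
    (Y : E → ℝ) (x : E) : E →L[ℝ] E →L[ℝ] ℝ :=
  fderiv ℝ (fun y => fderiv ℝ Y y) x

/-- `x` is a nondegenerate critical point of `Y`. -/
def IsNondegenerateCriticalPt {E : Type*} [NormedAddCommGroup E] [NormedSpace ℝ E]
    (Y : E → ℝ) (x : E) : Prop :=
  fderiv ℝ Y x = 0 ∧ ∀ v : E, (∀ w : E, hessianAt Y x v w = 0) → v = 0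

/-- The Hessian of `Y` at `x` has index `k`: the maximal dimension of a subspace on which the
Hessian quadratic form is negative definite equals `k` (for a nondegenerate symmetric form
this is the number of negative eigenvalues counted with multiplicity). -/
def HasMorseIndex {E : Type*} [NormedAddCommGroup E] [NormedSpace ℝ E]
    (Y : E → ℝ) (x : E) (k : ℕ) : Prop :=
  (∃ W : Submodule ℝ E, Module.finrank ℝ W = k ∧
      ∀ v ∈ W, v ≠ 0 → hessianAt Y x v v < 0) ∧
  (∀ W : Submodule ℝ E, (∀ v ∈ W, v ≠ 0 → hessianAt Y x v v < 0) →
      Module.finrank ℝ W ≤ k)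

open Set Filter Topology

section helpers

set_option linter.unusedSectionVars false

variable {E : Type*} [NormedAddCommGroup E] [InnerProductSpace ℝ E] [FiniteDimensional ℝ E]

theorem aux_anti {g g' : ℝ → ℝ} (h : ∀ t, HasDerivAt g (g' t) t)
    (h' : ∀ t ∈ Ioo (0 : ℝ) 1, g' t ≤ 0) : AntitoneOn g (Icc 0 1) := by
  apply antitoneOn_of_deriv_nonpos (convex_Icc 0 1)
  · exact fun t _ => (h t).continuousAt.continuousWithinAt
  · exact fun t _ => (h t).differentiableAt.differentiableWithinAt
  · intro t ht
    rw [interior_Icc] at ht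
    rw [(h t).deriv]
    exact h' t ht

theorem aux_strictAnti {g g' : ℝ → ℝ} (h : ∀ t, HasDerivAt g (g' t) t)
    (h' : ∀ t ∈ Ioo (0 : ℝ) 1, g' t < 0) : StrictAntiOn g (Icc 0 1) := by
  apply strictAntiOn_of_deriv_neg (convex_Icc 0 1)
  · exact fun t _ => (h t).continuousAt.continuousWithinAt
  · intro t ht
    rw [interior_Icc] at ht
    rw [(h t).deriv]
    exact h' t ht

theorem aux_line1 {Y : E → ℝ} (hY : ContDiff ℝ (⊤ : ℕ∞) Y) (p w : E) (t : ℝ) :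
    HasDerivAt (fun t : ℝ => Y (p + t • w)) (fderiv ℝ Y (p + t • w) w) t := by
  have h1 : HasDerivAt (fun t : ℝ => p + t • w) w t := by
    simpa using ((hasDerivAt_id t).smul_const w).const_add p
  have h2 : HasFDerivAt Y (fderiv ℝ Y (p + t • w)) (p + t • w) :=
    (hY.differentiable (by simp) _).hasFDerivAt
  exact h2.comp_hasDerivAt t h1

theorem aux_fderiv_contDiff {Y : E → ℝ} (hY : ContDiff ℝ (⊤ : ℕ∞) Y) :
    ContDiff ℝ (⊤ : ℕ∞) (fun y => fderiv ℝ Y y) :=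
  hY.fderiv_right (by simp)

theorem aux_hess_cont {Y : E → ℝ} (hY : ContDiff ℝ (⊤ : ℕ∞) Y) :
    Continuous (fun x => hessianAt Y x) :=
  (aux_fderiv_contDiff hY).continuous_fderiv (by simp)

theorem aux_hasFDeriv {Y : E → ℝ} (hY : ContDiff ℝ (⊤ : ℕ∞) Y) (x : E) :
    HasFDerivAt (fun y => fderiv ℝ Y y) (hessianAt Y x) x :=
  ((aux_fderiv_contDiff hY).differentiable (by simp) _).hasFDerivAt

theorem aux_line2 {Y : E → ℝ} (hY : ContDiff ℝ (⊤ : ℕ∞) Y) (p w : E) (t : ℝ) :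
    HasDerivAt (fun t : ℝ => fderiv ℝ Y (p + t • w) w) (hessianAt Y (p + t • w) w w) t := by
  have h1 : HasDerivAt (fun t : ℝ => p + t • w) w t := by
    simpa using ((hasDerivAt_id t).smul_const w).const_add p
  have h2 := (aux_hasFDeriv hY (p + t • w)).comp_hasDerivAt t h1
  have h3 := (ContinuousLinearMap.apply ℝ ℝ w).hasFDerivAt.comp_hasDerivAt t h2
  simpa [Function.comp_def] using h3

theorem aux_neg_near {Q : E → E → ℝ} (hQ : Continuous (fun q : E × E => Q q.1 q.2))
    (hom : ∀ x (c : ℝ) v, Q x (c • v) = c * (c * Q x v)) (z : E)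
    (W : Submodule ℝ E) (h : ∀ v ∈ W, v ≠ 0 → Q z v < 0) :
    ∀ᶠ x in 𝓝 z, ∀ v ∈ W, v ≠ 0 → Q x v < 0 := by
  have hK : IsCompact ((W : Set E) ∩ Metric.sphere 0 1) :=
    (isCompact_sphere 0 1).inter_left W.closed_of_finiteDimensional
  have h1 : ∀ᶠ x in 𝓝 z, ∀ v ∈ (W : Set E) ∩ Metric.sphere 0 1, Q x v < 0 := by
    apply hK.eventually_forall_of_forall_eventually
    rintro v ⟨hv, hv1⟩
    apply hQ.continuousAt.eventually_lt continuousAt_const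
    apply h v hv
    rintro rfl
    simp at hv1
  filter_upwards [h1] with x hx v hv hv0
  have hn : 0 < ‖v‖ := norm_pos_iff.2 hv0
  have := hx (‖v‖⁻¹ • v) ⟨W.smul_mem _ hv, by simp [norm_smul, hn.ne']⟩
  rw [hom] at this
  have h3 : 0 < ‖v‖⁻¹ := inv_pos.2 hn
  by_contra hcon
  push Not at hcon
  have : 0 ≤ ‖v‖⁻¹ * (‖v‖⁻¹ * Q x v) := by positivity
  linarith

theorem aux_hess_cont2 {Y : E → ℝ} (hY : ContDiff ℝ (⊤ : ℕ∞) Y) :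
    Continuous (fun q : E × E => hessianAt Y q.1 q.2 q.2) := by
  have := aux_hess_cont hY
  fun_prop

/-- joining lemma -/
theorem aux_join {S N : Set E} (hN : IsPreconnected N) (hNS : N ⊆ S) {p q a b : E}
    (hp : segment ℝ p a ⊆ S) (ha : a ∈ N) (hq : segment ℝ q b ⊆ S) (hb : b ∈ N) :
    connectedComponentIn S p = connectedComponentIn S q := by
  have key : ∀ {p a : E}, segment ℝ p a ⊆ S → a ∈ connectedComponentIn S p := fun h =>
    (convex_segment _ _).isPreconnected.subset_connectedComponentIn (left_mem_segment _ _ _) h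
      (right_mem_segment _ _ _)
  rw [connectedComponentIn_eq (key hp), connectedComponentIn_eq (key hq)]
  exact connectedComponentIn_eq (hN.subset_connectedComponentIn ha hNS hb)

theorem aux_seg {p w : E} {S : Set E} (h : ∀ t ∈ Icc (0 : ℝ) 1, p + t • w ∈ S) :
    segment ℝ p (p + w) ⊆ S := by
  rw [segment_eq_image']
  rintro _ ⟨t, ht, rfl⟩
  simpa using h t ht

theorem aux_ball {z p w : E} {r t : ℝ} (hp : p ∈ Metric.ball z (r / 2)) (hw : ‖w‖ < r / 2)
    (ht : t ∈ Icc (0 : ℝ) 1) : p + t • w ∈ Metric.ball z r := by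
  rw [mem_ball_iff_norm] at *
  have h1 : ‖t • w‖ ≤ ‖w‖ := by
    rw [norm_smul, Real.norm_of_nonneg ht.1]
    exact mul_le_of_le_one_left (norm_nonneg _) ht.2
  have h2 : p + t • w - z = (p - z) + t • w := by abel
  rw [h2]
  linarith [norm_add_le (p - z) (t • w)]

/-- Local connectedness at noncritical points. -/
theorem aux_noncrit {Y : E → ℝ} (hY : ContDiff ℝ (⊤ : ℕ∞) Y) (z : E)
    (hz : fderiv ℝ Y z ≠ 0) :
    ∃ U ∈ 𝓝 z, ∀ p ∈ U, ∀ q ∈ U, Y p < Y z → Y q < Y z →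
      connectedComponentIn {y | Y y < Y z} p = connectedComponentIn {y | Y y < Y z} q := by
  obtain ⟨v, hv⟩ : ∃ v, fderiv ℝ Y z v < 0 := by
    by_contra! hcon
    apply hz
    ext v
    have h1 := hcon v
    have h2 := hcon (-v)
    simp only [map_neg] at h2
    simp only [_root_.zero_apply]
    linarith
  have hc : Continuous (fun x => fderiv ℝ Y x v) := by
    have := (aux_fderiv_contDiff hY).continuous
    fun_prop
  obtain ⟨r, hr, hball⟩ := Metric.eventually_nhds_iff_ball.1
    (hc.continuousAt.eventually_lt (continuousAt_const (y := (0:ℝ))) hv)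
  obtain ⟨s, hs, hsv⟩ : ∃ s : ℝ, 0 < s ∧ ‖s • v‖ < r / 2 := by
    have hv' : 0 < ‖v‖ + 1 := by positivity
    refine ⟨r / 2 / (‖v‖ + 1), by positivity, ?_⟩
    rw [norm_smul, Real.norm_of_nonneg (by positivity), div_mul_eq_mul_div, div_lt_iff₀ hv']
    nlinarith
  have hneg : ∀ x ∈ Metric.ball z r, fderiv ℝ Y x (s • v) < 0 := by
    intro x hx
    rw [map_smul, smul_eq_mul]
    exact mul_neg_of_pos_of_neg hs (hball x hx)
  have hline : ∀ p ∈ Metric.ball z (r / 2),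
      StrictAntiOn (fun t : ℝ => Y (p + t • (s • v))) (Icc 0 1) := fun p hp =>
    aux_strictAnti (aux_line1 hY p (s • v)) fun t ht =>
      hneg _ (aux_ball hp hsv ⟨ht.1.le, ht.2.le⟩)
  have hz1 : Y (z + s • v) < Y z := by
    have := hline z (Metric.mem_ball_self (by positivity)) (left_mem_Icc.2 zero_le_one)
      (right_mem_Icc.2 zero_le_one) zero_lt_one
    simpa using this
  have hc2 : Continuous (fun p => Y (p + s • v)) := by
    have := hY.continuous
    fun_prop
  obtain ⟨δ, hδ, hδb⟩ := Metric.eventually_nhds_iff_ball.1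
    (hc2.continuousAt.eventually_lt (continuousAt_const (y := Y z)) hz1)
  refine ⟨Metric.ball z (min δ (r / 2)), Metric.ball_mem_nhds _ (by positivity), ?_⟩
  intro p hp q hq hpz hqz
  have hN : IsPreconnected ((fun p => p + s • v) '' Metric.ball z δ) :=
    (convex_ball z δ).isPreconnected.image _ (by fun_prop)
  have hsub : ∀ p ∈ Metric.ball z (min δ (r / 2)), Y p < Y z →
      segment ℝ p (p + s • v) ⊆ {y | Y y < Y z} := by
    intro p hp hpz
    apply aux_seg
    intro t ht
    have := (hline p (Metric.ball_subset_ball (min_le_right _ _) hp)).antitoneOn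
      (left_mem_Icc.2 zero_le_one) ht ht.1
    simp only [zero_smul, add_zero] at this
    exact this.trans_lt hpz
  refine aux_join hN ?_ (hsub p hp hpz) ?_ (hsub q hq hqz) ?_
  · rintro _ ⟨x, hx, rfl⟩
    exact hδb x hx
  · exact ⟨p, Metric.ball_subset_ball (min_le_left _ _) hp, rfl⟩
  · exact ⟨q, Metric.ball_subset_ball (min_le_left _ _) hq, rfl⟩

/-- Local connectedness at critical points of index at least two. -/
theorem aux_index2 {Y : E → ℝ} (hY : ContDiff ℝ (⊤ : ℕ∞) Y) (z : E)
    (hz : fderiv ℝ Y z = 0) (W : Submodule ℝ E) (hW : 1 < Module.finrank ℝ W)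
    (hneg : ∀ v ∈ W, v ≠ 0 → hessianAt Y z v v < 0) :
    ∃ U ∈ 𝓝 z, ∀ p ∈ U, ∀ q ∈ U, Y p < Y z → Y q < Y z →
      connectedComponentIn {y | Y y < Y z} p = connectedComponentIn {y | Y y < Y z} q := by
  obtain ⟨r, hr, hball⟩ := Metric.eventually_nhds_iff_ball.1
    (aux_neg_near (Q := fun x v => hessianAt Y x v v) (aux_hess_cont2 hY) (by simp) z W hneg)
  have hder : ∀ p ∈ Metric.ball z (r / 2), ∀ w ∈ W, w ≠ 0 → ‖w‖ < r / 2 →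
      StrictAntiOn (fun t : ℝ => fderiv ℝ Y (p + t • w) w) (Icc 0 1) := fun p hp w hw hw0 hwr =>
    aux_strictAnti (aux_line2 hY p w) fun t ht =>
      hball _ (aux_ball hp hwr ⟨ht.1.le, ht.2.le⟩) w hw hw0
  have h01 : (0:ℝ) ∈ Icc (0:ℝ) 1 := left_mem_Icc.2 zero_le_one
  set ρ := r / 4 with hρ
  have hρ0 : 0 < ρ := by positivity
  set K : Set E := (W : Set E) ∩ Metric.sphere 0 ρ with hKdef
  have hKn : ∀ w ∈ K, w ∈ W ∧ w ≠ 0 ∧ ‖w‖ < r / 2 := by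
    rintro w ⟨hw, hw1⟩
    have hw1 : ‖w‖ = ρ := by simpa using hw1
    refine ⟨hw, ?_, by linarith⟩
    rintro rfl
    simp at hw1
    linarith
  have hK : IsCompact K := (isCompact_sphere 0 ρ).inter_left W.closed_of_finiteDimensional
  have hKc : IsPreconnected K := by
    have h1 : 1 < Module.rank ℝ W := by
      rw [← Module.finrank_eq_rank]
      exact_mod_cast hW
    have h2 := (isPreconnected_sphere h1 0 ρ).image (Subtype.val : W → E)
      continuous_subtype_val.continuousOn
    convert h2 using 1
    ext x
    simp [hKdef, and_comm]
  obtain ⟨w₀, hw₀⟩ : K.Nonempty := by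
    have : Nontrivial W := Module.nontrivial_of_finrank_pos (R := ℝ) (by omega)
    obtain ⟨w, hw⟩ := (NormedSpace.sphere_nonempty (E := W) (x := 0) (r := ρ)).2 hρ0.le
    exact ⟨w, w.2, by simpa using hw⟩
  have hKY : ∀ᶠ p in 𝓝 z, ∀ w ∈ K, Y (p + w) < Y z := by
    apply hK.eventually_forall_of_forall_eventually
    intro w hw
    obtain ⟨hw1, hw2, hw3⟩ := hKn w hw
    have hc : Continuous (fun q : E × E => Y (q.1 + q.2)) := by
      have := hY.continuous
      fun_prop
    apply hc.continuousAt.eventually_lt continuousAt_const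
    have hz' : z ∈ Metric.ball z (r / 2) := Metric.mem_ball_self (by positivity)
    have := aux_strictAnti (aux_line1 hY z w) fun t ht => by
      have := hder z hz' w hw1 hw2 hw3 h01 ⟨ht.1.le, ht.2.le⟩ ht.1
      simpa [hz] using this
    simpa using this h01 (right_mem_Icc.2 zero_le_one) zero_lt_one
  obtain ⟨δ, hδ, hδb⟩ := Metric.eventually_nhds_iff_ball.1 hKY
  refine ⟨Metric.ball z (min δ (r / 2)), Metric.ball_mem_nhds _ (by positivity), ?_⟩
  have hN : IsPreconnected ((fun q : E × E => q.1 + q.2) '' (Metric.ball z δ ×ˢ K)) :=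
    ((convex_ball z δ).isPreconnected.prod hKc).image _ (by fun_prop)
  have hsub : ∀ p ∈ Metric.ball z (min δ (r / 2)), Y p < Y z → ∃ w ∈ K,
      segment ℝ p (p + w) ⊆ {y | Y y < Y z} := by
    intro p hp hpz
    have hp2 := Metric.ball_subset_ball (min_le_right _ _) hp
    have main : ∀ w ∈ K, fderiv ℝ Y p w ≤ 0 → segment ℝ p (p + w) ⊆ {y | Y y < Y z} := by
      intro w hw hpw
      obtain ⟨hw1, hw2, hw3⟩ := hKn w hw
      apply aux_seg
      intro t ht
      have h2 := aux_anti (aux_line1 hY p w) fun t ht => by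
        have := hder p hp2 w hw1 hw2 hw3 h01 ⟨ht.1.le, ht.2.le⟩ ht.1
        simp only [zero_smul, add_zero] at this
        linarith
      have := h2 h01 ht ht.1
      simp only [zero_smul, add_zero] at this
      exact this.trans_lt hpz
    rcases le_total (fderiv ℝ Y p w₀) 0 with h | h
    · exact ⟨w₀, hw₀, main w₀ hw₀ h⟩
    · have hw' : -w₀ ∈ K := ⟨W.neg_mem hw₀.1, by simpa using hw₀.2⟩
      exact ⟨-w₀, hw', main _ hw' (by simpa using h)⟩
  intro p hp q hq hpz hqz
  obtain ⟨a, ha, hpa⟩ := hsub p hp hpz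
  obtain ⟨b, hb, hqb⟩ := hsub q hq hqz
  refine aux_join hN ?_ hpa ?_ hqb ?_
  · rintro _ ⟨⟨x, w⟩, ⟨hx, hw⟩, rfl⟩
    exact hδb x hx w hw
  · exact ⟨(p, a), ⟨Metric.ball_subset_ball (min_le_left _ _) hp, ha⟩, rfl⟩
  · exact ⟨(q, b), ⟨Metric.ball_subset_ball (min_le_left _ _) hq, hb⟩, rfl⟩

/-- A nondegenerate critical point without negative direction is a local minimum. -/
theorem aux_localMin {Y : E → ℝ} (hY : ContDiff ℝ (⊤ : ℕ∞) Y) (z : E)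
    (hz : fderiv ℝ Y z = 0) (hnd : ∀ v, (∀ w, hessianAt Y z v w = 0) → v = 0)
    (hpos : ∀ v, 0 ≤ hessianAt Y z v v) : IsLocalMin Y z := by
  have hsymm : ∀ v w, hessianAt Y z v w = hessianAt Y z w v := by
    have := (hY.contDiffAt (x := z)).isSymmSndFDerivAt (by
      rw [minSmoothness_of_isRCLikeNormedField]
      exact WithTop.coe_le_coe.2 (le_top (a := (2 : ℕ∞))))
    exact this
  have hpd : ∀ v ∈ (⊤ : Submodule ℝ E), v ≠ 0 → -hessianAt Y z v v < 0 := by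
    intro v _ hv
    simp only [Left.neg_neg_iff]
    refine lt_of_le_of_ne (hpos v) fun h0 => hv (hnd v fun w => ?_)
    by_contra hne
    set b := hessianAt Y z v w with hb
    set c := hessianAt Y z w w with hc
    have hc0 : 0 ≤ c := hpos w
    have key : ∀ t : ℝ, 0 ≤ 2 * t * b + c := by
      intro t
      have := hpos (t • v + w)
      simp only [map_add, map_smul, _root_.add_apply,
        _root_.smul_apply, smul_eq_mul, ← h0, hsymm w v, ← hb, ← hc] at this
      linarith
    have := key (-(c + 1) / (2 * b))
    have h3 : 2 * (-(c + 1) / (2 * b)) * b = -(c + 1) := by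
      field_simp
    linarith
  obtain ⟨r, hr, hball⟩ := Metric.eventually_nhds_iff_ball.1
    (aux_neg_near (Q := fun x v => -hessianAt Y x v v) (aux_hess_cont2 hY).neg (by simp) z ⊤ hpd)
  refine Metric.eventually_nhds_iff_ball.2 ⟨r / 2, by positivity, fun x hx => ?_⟩
  obtain ⟨w, rfl⟩ : ∃ w, x = z + w := ⟨x - z, by abel⟩
  by_cases hw : w = 0
  · simp [hw]
  have hwr : ‖w‖ < r / 2 := by simpa using hx
  have hz' : z ∈ Metric.ball z (r / 2) := Metric.mem_ball_self (by positivity)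
  have h01 : (0:ℝ) ∈ Icc (0:ℝ) 1 := left_mem_Icc.2 zero_le_one
  have h1 := aux_anti (fun t => (aux_line2 hY z w t).neg) fun t ht => by
    have := hball _ (aux_ball hz' hwr ⟨ht.1.le, ht.2.le⟩) w trivial hw
    simpa using this.le
  have h2 := aux_anti (fun t => (aux_line1 hY z w t).neg) fun t ht => by
    have := h1 h01 ⟨ht.1.le, ht.2.le⟩ ht.1.le
    simpa [hz] using this
  have := h2 h01 (right_mem_Icc.2 zero_le_one) zero_le_one
  simpa using this

theorem aux_isolated {Y : E → ℝ} (hY : ContDiff ℝ (⊤ : ℕ∞) Y) (z : E)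
    (hnd : ∀ v, (∀ w, hessianAt Y z v w = 0) → v = 0) :
    ∀ᶠ x in 𝓝[≠] z, fderiv ℝ Y x ≠ 0 := by
  apply (aux_hasFDeriv hY z).eventually_ne
  obtain ⟨K, _, hK⟩ := LinearMap.exists_antilipschitzWith (hessianAt Y z : E →ₗ[ℝ] E →L[ℝ] ℝ) (by
    rw [LinearMap.ker_eq_bot']
    intro v hv
    refine hnd v fun w => ?_
    have := congrArg (fun f : E →L[ℝ] ℝ => f w) hv
    simpa using this)
  exact ⟨K, hK⟩

theorem aux_finite {Y : E → ℝ} (hY : ContDiff ℝ (⊤ : ℕ∞) Y)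
    (hM : ∀ x, fderiv ℝ Y x = 0 → ∀ v, (∀ w, hessianAt Y x v w = 0) → v = 0)
    {K : Set E} (hK : IsCompact K) : (K ∩ {x | fderiv ℝ Y x = 0}).Finite := by
  by_contra hinf
  obtain ⟨x, -, hx⟩ := Set.Infinite.exists_accPt_of_subset_isCompact hinf hK inter_subset_left
  have hcl : IsClosed {x | fderiv ℝ Y x = 0} :=
    isClosed_eq (aux_fderiv_contDiff hY).continuous continuous_const
  rw [accPt_iff_frequently_nhdsNE] at hx
  have hx0 : fderiv ℝ Y x = 0 := by
    have : x ∈ closure {x | fderiv ℝ Y x = 0} := by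
      rw [mem_closure_iff_frequently]
      exact (hx.filter_mono nhdsWithin_le_nhds).mono fun y hy => hy.2
    exact hcl.closure_subset this
  have := aux_isolated hY x (hM x hx0)
  obtain ⟨y, hy1, hy2⟩ := (hx.and_eventually this).exists
  exact hy2 hy1.2

/-- Coercivity. -/
theorem aux_compact {Y : E → ℝ} (hY : ContDiff ℝ (⊤ : ℕ∞) Y) {C : ℝ} (hC : 0 < C)
    (hbdd : BddBelow (Set.range Y)) (hgrad : ∀ x, C < ‖x‖ → 1 / C ≤ ‖fderiv ℝ Y x‖) (a : ℝ) :
    IsCompact {x | Y x ≤ a} := by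
  obtain ⟨b, hb⟩ := hbdd
  have hb : ∀ x, b ≤ Y x := fun x => hb ⟨x, rfl⟩
  apply Metric.isCompact_of_isClosed_isBounded (isClosed_le hY.continuous continuous_const)
  set D : ℝ := max (a - b) 0 + 1 with hD
  have hD0 : 0 < D := by positivity
  have hDa : a - b ≤ D := by linarith [le_max_left (a - b) 0]
  set ε : ℝ := 1 / (8 * C ^ 2 * D) with hε
  have hε0 : 0 < ε := by positivity
  refine (Metric.isBounded_closedBall (x := (0:E)) (r := C + Real.sqrt (D / ε))).subset ?_
  intro x hx
  have hx : Y x ≤ a := hx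
  set F : E → ℝ := fun y => Y y + ε * ‖y - x‖ ^ 2 with hF
  have hFc : Continuous F := by
    have := hY.continuous
    fun_prop
  have hFin : ∃ y, ∀ z, F y ≤ F z := by
    apply hFc.exists_forall_le' x
    have hk := isCompact_closedBall x (Real.sqrt (D / ε))
    filter_upwards [hk.compl_mem_cocompact] with y hy
    have hy : Real.sqrt (D / ε) < ‖y - x‖ := by simpa [dist_eq_norm] using hy
    have h1 : D / ε < ‖y - x‖ ^ 2 := by
      rw [← Real.sqrt_lt' (lt_of_le_of_lt (Real.sqrt_nonneg _) hy)]
      exact hy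
    rw [div_lt_iff₀ hε0] at h1
    simp only [hF, sub_self, norm_zero]
    nlinarith [hb y]
  obtain ⟨y, hy⟩ := hFin
  have hyx := hy x
  simp only [hF, sub_self, norm_zero] at hyx
  have hle : ε * ‖y - x‖ ^ 2 ≤ D := by nlinarith [hb y]
  have hder : HasFDerivAt F (fderiv ℝ Y y + ε • (2 • (innerSL ℝ (y - x)))) y := by
    have h1 : HasFDerivAt Y (fderiv ℝ Y y) y := (hY.differentiable (by simp) _).hasFDerivAt
    have h2 := ((hasFDerivAt_id (𝕜 := ℝ) y).sub_const x).norm_sq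
    have h3 : HasFDerivAt F _ y := h1.add (h2.const_mul ε)
    simpa using h3
  have hmin : IsLocalMin F y := Filter.Eventually.of_forall hy
  have h0 := hmin.hasFDerivAt_eq_zero hder
  have hn : ‖fderiv ℝ Y y‖ ≤ 2 * ε * ‖y - x‖ := by
    rw [eq_neg_of_add_eq_zero_left h0, norm_neg, norm_smul, Real.norm_of_nonneg hε0.le]
    have : ‖2 • (innerSL ℝ (y - x))‖ = 2 * ‖y - x‖ := by
      rw [← Nat.cast_smul_eq_nsmul ℝ, norm_smul, innerSL_apply_norm]
      simp
    rw [this]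
    linarith
  have hyC : ‖y‖ ≤ C := by
    by_contra hcon
    push Not at hcon
    have h1 := (hgrad y hcon).trans hn
    have h2 : (1 / C) ^ 2 ≤ (2 * ε * ‖y - x‖) ^ 2 := by
      apply pow_le_pow_left₀ (by positivity) h1
    have h3 : (2 * ε * ‖y - x‖) ^ 2 = 4 * ε * (ε * ‖y - x‖ ^ 2) := by ring
    have h4 : 4 * ε * (ε * ‖y - x‖ ^ 2) ≤ 4 * ε * D := by gcongr
    have h5 : 4 * ε * D = (1 / C) ^ 2 / 2 := by
      rw [hε]
      field_simp
      norm_num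
    have : 0 < (1 / C) ^ 2 := by positivity
    linarith
  have hd : ‖y - x‖ ≤ Real.sqrt (D / ε) := by
    apply Real.le_sqrt_of_sq_le
    rw [le_div_iff₀ hε0]
    linarith
  have : x = y - (y - x) := by abel
  rw [mem_closedBall_zero_iff, this]
  linarith [norm_sub_le y (y - x)]

theorem aux_comp_eq {S : Set E} {p q x : E} (hp : x ∈ connectedComponentIn S p)
    (hq : x ∈ connectedComponentIn S q) :
    connectedComponentIn S p = connectedComponentIn S q :=
  (connectedComponentIn_eq hp).trans (connectedComponentIn_eq hq).symm

theorem aux_lt {Y : E → ℝ} {σ : ℝ} {p x : E}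
    (hx : x ∈ connectedComponentIn {y | Y y < σ} p) : Y x < σ :=
  connectedComponentIn_subset {y | Y y < σ} p hx

theorem aux_closure {S : Set E} (hS : IsOpen S) {p z : E}
    (hz : z ∈ closure (connectedComponentIn S p)) (hzS : z ∈ S) :
    z ∈ connectedComponentIn S p := by
  have ho : IsOpen (connectedComponentIn S z) := hS.connectedComponentIn
  obtain ⟨x, hx1, hx2⟩ := mem_closure_iff.1 hz _ ho (mem_connectedComponentIn hzS)
  rw [aux_comp_eq hx2 hx1]
  exact mem_connectedComponentIn hzS

theorem aux_nonempty {Y : E → ℝ} (hY : ContDiff ℝ (⊤ : ℕ∞) Y)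
    (hM : ∀ x, fderiv ℝ Y x = 0 → ∀ v, (∀ w, hessianAt Y x v w = 0) → v = 0)
    {m m' : E} (hmm' : m ≠ m') (hm : IsLocalMin Y m) (hle : Y m' ≤ Y m) :
    ∃ a, Y m < a ∧ connectedComponentIn {y | Y y < a} m ≠ connectedComponentIn {y | Y y < a} m' := by
  have hiso := aux_isolated hY m (hM m hm.fderiv_eq_zero)
  rw [eventually_nhdsWithin_iff] at hiso
  have hm2 : ∀ᶠ x in 𝓝 m, IsLocalMin Y x ∨ Y m < Y x := by
    filter_upwards [hm.eventually_nhds, hm] with x hx hx2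
    rcases hx2.lt_or_eq with h | h
    · exact Or.inr h
    · left
      filter_upwards [hx] with y hy
      rwa [← h]
  obtain ⟨R, hR, hball⟩ := Metric.eventually_nhds_iff_ball.1 (hiso.and hm2)
  have hd : 0 < dist m m' := dist_pos.2 hmm'
  set r := min (R / 2) (dist m m' / 2) with hr
  have hr0 : 0 < r := by positivity
  have hrR : r < R := (min_le_left _ _).trans_lt (by linarith)
  have hrd : r < dist m m' := (min_le_right _ _).trans_lt (by linarith)
  have hsph : ∀ x ∈ Metric.sphere m r, Y m < Y x := by
    intro x hx
    have hx' : dist x m = r := hx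
    obtain ⟨h1, h2⟩ := hball x (by rw [Metric.mem_ball, hx']; exact hrR)
    rcases h2 with h2 | h2
    · refine absurd h2.fderiv_eq_zero (h1 ?_)
      rintro rfl
      rw [dist_self] at hx'
      exact hr0.ne hx'
    · exact h2
  obtain ⟨a, ha, hYA⟩ := (isCompact_sphere m r).exists_forall_le' hY.continuous.continuousOn hsph
  refine ⟨a, ha, fun heq => ?_⟩
  have hmS : m ∈ {y | Y y < a} := ha
  have hm'S : m' ∈ {y | Y y < a} := hle.trans_lt ha
  have hsub : connectedComponentIn {y | Y y < a} m ⊆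
      Metric.ball m r ∪ (Metric.closedBall m r)ᶜ := by
    intro x hx
    have hx : Y x < a := aux_lt hx
    rcases lt_trichotomy (dist x m) r with h | h | h
    · exact Or.inl h
    · exact absurd (hYA x h) (not_le.2 hx)
    · right
      simpa using h
  have h2 := isPreconnected_connectedComponentIn.subset_left_of_subset_union Metric.isOpen_ball
    Metric.isClosed_closedBall.isOpen_compl
    (disjoint_compl_right.mono_left Metric.ball_subset_closedBall) hsub
    ⟨m, mem_connectedComponentIn hmS, Metric.mem_ball_self hr0⟩
  have h3 : m' ∈ connectedComponentIn {y | Y y < a} m := by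
    rw [heq]
    exact mem_connectedComponentIn hm'S
  have h4 := h2 h3
  rw [Metric.mem_ball, dist_comm] at h4
  linarith

/-- Local analysis at a point in the closure of two components. -/
theorem aux_touch {Y : E → ℝ} (hY : ContDiff ℝ (⊤ : ℕ∞) Y)
    (hM : ∀ x, fderiv ℝ Y x = 0 → ∀ v, (∀ w, hessianAt Y x v w = 0) → v = 0)
    {σ : ℝ} {p q z : E}
    (hpq : connectedComponentIn {y | Y y < σ} p ≠ connectedComponentIn {y | Y y < σ} q)
    (hzp : z ∈ closure (connectedComponentIn {y | Y y < σ} p))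
    (hzq : z ∈ closure (connectedComponentIn {y | Y y < σ} q)) :
    IsNondegenerateCriticalPt Y z ∧ HasMorseIndex Y z 1 ∧ Y z = σ := by
  have hS : IsOpen {y | Y y < σ} := isOpen_lt hY.continuous continuous_const
  have hzσ : Y z = σ := by
    have h1 : Y z ≤ σ := by
      have hcl : IsClosed {y | Y y ≤ σ} := isClosed_le hY.continuous continuous_const
      have hsub : connectedComponentIn {y | Y y < σ} p ⊆ {y | Y y ≤ σ} := fun x hx =>
        (aux_lt hx).le
      exact closure_minimal hsub hcl hzp
    refine h1.eq_of_not_lt fun h2 => ?_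
    exact hpq (aux_comp_eq (aux_closure hS hzp h2) (aux_closure hS hzq h2))
  subst hzσ
  have hnot : ¬ ∃ U ∈ 𝓝 z, ∀ p ∈ U, ∀ q ∈ U, Y p < Y z → Y q < Y z →
      connectedComponentIn {y | Y y < Y z} p = connectedComponentIn {y | Y y < Y z} q := by
    rintro ⟨U, hU, h⟩
    obtain ⟨x, hxU, hx⟩ := mem_closure_iff_nhds.1 hzp U hU
    obtain ⟨y, hyU, hy⟩ := mem_closure_iff_nhds.1 hzq U hU
    apply hpq
    rw [connectedComponentIn_eq hx, connectedComponentIn_eq hy]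
    exact h x hxU y hyU (aux_lt hx) (aux_lt hy)
  have hcrit : fderiv ℝ Y z = 0 := by
    by_contra h
    exact hnot (aux_noncrit hY z h)
  refine ⟨⟨hcrit, hM z hcrit⟩, ⟨?_, ?_⟩, rfl⟩
  · obtain ⟨v, hv⟩ : ∃ v, hessianAt Y z v v < 0 := by
      by_contra! hcon
      have hmin := aux_localMin hY z hcrit (hM z hcrit) hcon
      obtain ⟨x, hxU, hx⟩ := mem_closure_iff_nhds.1 hzp _ hmin
      have h1 : Y z ≤ Y x := hxU
      have h2 : Y x < Y z := aux_lt hx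
      linarith
    have hv0 : v ≠ 0 := by
      rintro rfl
      simp at hv
    refine ⟨Submodule.span ℝ {v}, finrank_span_singleton hv0, ?_⟩
    intro w hw hw0
    obtain ⟨c, rfl⟩ := Submodule.mem_span_singleton.1 hw
    have hc : c ≠ 0 := by
      rintro rfl
      simp at hw0
    simp only [map_smul, _root_.smul_apply, smul_eq_mul]
    have : 0 < c * c := mul_self_pos.2 hc
    nlinarith
  · intro W hW
    by_contra! hcon
    exact hnot (aux_index2 hY z hcrit W hcon hW)

/-- Every component contains a critical point. -/
theorem aux_comp_crit {Y : E → ℝ} (hY : ContDiff ℝ (⊤ : ℕ∞) Y) {σ : ℝ}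
    (hK : IsCompact {y | Y y ≤ σ}) {p : E} (hp : Y p < σ) :
    ∃ q, Y q ≤ σ ∧ fderiv ℝ Y q = 0 ∧ q ∈ connectedComponentIn {y | Y y < σ} p := by
  have hS : IsOpen {y | Y y < σ} := isOpen_lt hY.continuous continuous_const
  have hcl : IsClosed {y | Y y ≤ σ} := isClosed_le hY.continuous continuous_const
  have hsub : connectedComponentIn {y | Y y < σ} p ⊆ {y | Y y ≤ σ} := fun x hx =>
    (aux_lt hx).le
  have hc : IsCompact (closure (connectedComponentIn {y | Y y < σ} p)) :=
    hK.of_isClosed_subset isClosed_closure (closure_minimal hsub hcl)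
  have hpc : p ∈ connectedComponentIn {y | Y y < σ} p := mem_connectedComponentIn hp
  obtain ⟨q, hq, hmin⟩ := hc.exists_isMinOn ⟨p, subset_closure hpc⟩ hY.continuous.continuousOn
  have hqσ : Y q < σ := lt_of_le_of_lt (hmin (subset_closure hpc)) hp
  have hqc := aux_closure hS hq hqσ
  refine ⟨q, hqσ.le, ?_, hqc⟩
  apply IsLocalMin.fderiv_eq_zero
  filter_upwards [hS.connectedComponentIn.mem_nhds hqc] with x hx
  exact hmin (subset_closure hx)

theorem aux_main {Y : E → ℝ} (hY : ContDiff ℝ (⊤ : ℕ∞) Y)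
    (hM : ∀ x, fderiv ℝ Y x = 0 → ∀ v, (∀ w, hessianAt Y x v w = 0) → v = 0)
    (hK : ∀ a, IsCompact {y | Y y ≤ a}) {σ : ℝ} {m m' : E} (hm : Y m < σ) (hm' : Y m' < σ)
    (hne : connectedComponentIn {y | Y y < σ} m ≠ connectedComponentIn {y | Y y < σ} m')
    (hsup : ∀ b, σ < b →
      connectedComponentIn {y | Y y < b} m = connectedComponentIn {y | Y y < b} m') :
    ∃ p, Y p < σ ∧
      connectedComponentIn {y | Y y < σ} p ≠ connectedComponentIn {y | Y y < σ} m ∧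
      (closure (connectedComponentIn {y | Y y < σ} m) ∩
        closure (connectedComponentIn {y | Y y < σ} p)).Nonempty := by
  by_contra! hcon
  set S : Set E := {y | Y y < σ} with hSdef
  set Ω := connectedComponentIn S m with hΩ
  have hS : IsOpen S := isOpen_lt hY.continuous continuous_const
  have hcl : IsClosed {y | Y y ≤ σ} := isClosed_le hY.continuous continuous_const
  have hfin := aux_finite hY hM (hK σ)
  set F : Set E := {y | Y y ≤ σ} ∩ {x | fderiv ℝ Y x = 0} with hF
  -- the closed complement
  set G : Set E := F ∩ {q | q ∈ S ∧ connectedComponentIn S q ≠ Ω} with hG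
  have hGfin : G.Finite := hfin.subset inter_subset_left
  set L : Set E := ⋃ q ∈ G, closure (connectedComponentIn S q) with hL
  have hLcl : IsClosed L := hGfin.isClosed_biUnion fun q _ => isClosed_closure
  have hΩsub : closure Ω ⊆ {y | Y y ≤ σ} := closure_minimal
    (fun x hx => (aux_lt hx).le) hcl
  have hLsub : L ⊆ {y | Y y ≤ σ} := by
    refine iUnion₂_subset fun q _ => closure_minimal ?_ hcl
    exact fun x hx => (aux_lt hx).le
  have hSsub : S ⊆ closure Ω ∪ L := by
    intro x hx
    by_cases hxΩ : connectedComponentIn S x = Ω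
    · left
      apply subset_closure
      rw [← hxΩ]
      exact mem_connectedComponentIn hx
    · right
      obtain ⟨q, hq1, hq2, hq3⟩ := aux_comp_crit hY (hK σ) hx
      have heq : connectedComponentIn S x = connectedComponentIn S q := connectedComponentIn_eq hq3
      refine mem_iUnion₂.2 ⟨q, ⟨⟨hq1, hq2⟩, connectedComponentIn_subset S x hq3, ?_⟩, ?_⟩
      · rwa [← heq]
      · apply subset_closure
        rw [← heq]
        exact mem_connectedComponentIn hx
  have hdisj : Disjoint (closure Ω) L := by
    rw [Set.disjoint_left]
    intro x hx hxL
    obtain ⟨q, hq, hxq⟩ := mem_iUnion₂.1 hxL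
    have := hcon q hq.2.1 hq.2.2
    exact (this ▸ (⟨hx, hxq⟩ : x ∈ closure Ω ∩ closure (connectedComponentIn S q)) : x ∈ (∅ : Set E))
  have hcover : {y | Y y ≤ σ} ⊆ closure Ω ∪ (L ∪ F \ closure Ω) := by
    intro x hx
    by_cases h1 : x ∈ closure Ω ∪ L
    · rcases h1 with h | h
      · exact Or.inl h
      · exact Or.inr (Or.inl h)
    · refine Or.inr (Or.inr ⟨⟨hx, ?_⟩, fun h => h1 (Or.inl h)⟩)
      apply IsLocalMin.fderiv_eq_zero
      have ho : IsOpen (closure Ω ∪ L)ᶜ := (isClosed_closure.union hLcl).isOpen_compl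
      filter_upwards [ho.mem_nhds h1] with y hy
      have : y ∉ S := fun h => hy (hSsub h)
      have h2 : σ ≤ Y y := not_lt.1 this
      exact le_trans hx h2
  have hc1 : IsCompact (closure Ω) := (hK σ).of_isClosed_subset isClosed_closure hΩsub
  have hc2 : IsCompact (L ∪ F \ closure Ω) :=
    ((hK σ).of_isClosed_subset hLcl hLsub).union (hfin.subset sdiff_subset).isCompact
  obtain ⟨V₁, V₂, hV₁, hV₂, h1, h2, h12⟩ := SeparatedNhds.of_isCompact_isCompact hc1 hc2
    (hdisj.union_right disjoint_sdiff_right)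
  have hc3 : IsCompact ({y | Y y ≤ σ + 1} \ (V₁ ∪ V₂)) := (hK _).diff (hV₁.union hV₂)
  obtain ⟨b, hb, hbY⟩ := hc3.exists_forall_le' (f := Y) (a := σ) hY.continuous.continuousOn (by
    intro x hx
    by_contra! hle
    rcases hcover hle with h | h
    · exact hx.2 (Or.inl (h1 h))
    · exact hx.2 (Or.inr (h2 h)))
  set c := min b (σ + 1) with hc
  have hσc : σ < c := lt_min hb (by linarith)
  have hsub : connectedComponentIn {y | Y y < c} m ⊆ V₁ ∪ V₂ := by
    intro x hx
    have hx : Y x < c := aux_lt hx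
    by_contra hxV
    have := hbY x ⟨(hx.trans_le (min_le_right _ _)).le, hxV⟩
    exact absurd (hx.trans_le (min_le_left _ _)) (not_lt.2 this)
  have hmΩ : m ∈ Ω := mem_connectedComponentIn hm
  have h3 := isPreconnected_connectedComponentIn.subset_left_of_subset_union hV₁ hV₂ h12 hsub
    ⟨m, mem_connectedComponentIn (hm.trans hσc), h1 (subset_closure hmΩ)⟩
  have h4 : m' ∈ V₁ := by
    apply h3
    rw [hsup c hσc]
    exact mem_connectedComponentIn (hm'.trans hσc)
  have hm'L : m' ∈ L := by
    rcases hSsub hm' with h | h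
    · exact absurd (connectedComponentIn_eq (aux_closure hS h hm')) hne
    · exact h
  exact Set.disjoint_left.1 h12 h4 (h2 (Or.inl hm'L))

theorem aux_all {Y : E → ℝ} (hY : ContDiff ℝ (⊤ : ℕ∞) Y)
    (hM : ∀ x, fderiv ℝ Y x = 0 → ∀ v, (∀ w, hessianAt Y x v w = 0) → v = 0)
    (hK : ∀ a, IsCompact {y | Y y ≤ a}) {m m' : E} (hmm' : m ≠ m')
    (hm : IsLocalMin Y m) (hm' : IsLocalMin Y m') :
    let A : Set ℝ := {a | Y m < a ∧ Y m' < a ∧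
      connectedComponentIn {y | Y y < a} m ≠ connectedComponentIn {y | Y y < a} m'}
    A.Nonempty ∧ BddAbove A ∧
    (Y m < sSup A ∧ Y m' < sSup A ∧
      connectedComponentIn {y | Y y < sSup A} m ≠ connectedComponentIn {y | Y y < sSup A} m') ∧
    (∃ Ω'' : Set E,
      (∃ p, Y p < sSup A ∧ Ω'' = connectedComponentIn {y | Y y < sSup A} p) ∧
      Ω'' ≠ connectedComponentIn {y | Y y < sSup A} m ∧
      (closure (connectedComponentIn {y | Y y < sSup A} m) ∩ closure Ω'').Nonempty ∧
      (∀ z ∈ closure (connectedComponentIn {y | Y y < sSup A} m) ∩ closure Ω'',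
        IsNondegenerateCriticalPt Y z ∧ HasMorseIndex Y z 1 ∧ Y z = sSup A)) := by
  intro A
  have hAne : A.Nonempty := by
    rcases le_total (Y m') (Y m) with h | h
    · obtain ⟨a, ha, hne⟩ := aux_nonempty hY hM hmm' hm h
      exact ⟨a, ha, h.trans_lt ha, hne⟩
    · obtain ⟨a, ha, hne⟩ := aux_nonempty hY hM hmm'.symm hm' h
      exact ⟨a, h.trans_lt ha, ha, hne.symm⟩
  -- a compact connected set containing both points bounds `A`
  have hpre : ∀ (P : Set E) (c : ℝ), IsPreconnected P → m ∈ P → m' ∈ P → (∀ x ∈ P, Y x ≤ c) →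
      ∀ a ∈ A, a ≤ c := by
    intro P c hP hmP hm'P hPc a ha
    by_contra! hca
    refine ha.2.2 (connectedComponentIn_eq ?_)
    exact hP.subset_connectedComponentIn hmP (fun x hx => (hPc x hx).trans_lt hca) hm'P
  have hbdd : BddAbove A := by
    have hseg : IsCompact (segment ℝ m m') := by
      rw [segment_eq_image']
      exact isCompact_Icc.image (by fun_prop)
    obtain ⟨c, hc⟩ := hseg.bddAbove_image hY.continuous.continuousOn
    exact ⟨c, hpre (segment ℝ m m') c (convex_segment _ _).isPreconnected
      (left_mem_segment _ _ _) (right_mem_segment _ _ _) fun x hx => hc ⟨x, hx, rfl⟩⟩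
  obtain ⟨a₀, ha₀⟩ := hAne
  have hle := le_csSup hbdd ha₀
  have h1 : Y m < sSup A := ha₀.1.trans_le hle
  have h2 : Y m' < sSup A := ha₀.2.1.trans_le hle
  have hne : connectedComponentIn {y | Y y < sSup A} m ≠
      connectedComponentIn {y | Y y < sSup A} m' := by
    intro heq
    have hS : IsOpen {y | Y y < sSup A} := isOpen_lt hY.continuous continuous_const
    have hmc : m ∈ connectedComponentIn {y | Y y < sSup A} m := mem_connectedComponentIn h1
    have hm'c : m' ∈ connectedComponentIn {y | Y y < sSup A} m := by
      rw [heq]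
      exact mem_connectedComponentIn h2
    have hpath : IsPathConnected (connectedComponentIn {y | Y y < sSup A} m) :=
      (hS.connectedComponentIn.isConnected_iff_isPathConnected).1
        (isConnected_connectedComponentIn_iff.2 h1)
    obtain ⟨γ, hγ⟩ := hpath.joinedIn m hmc m' hm'c
    have hcr : IsCompact (range γ) := isCompact_range γ.continuous
    obtain ⟨x, ⟨t, rfl⟩, hx⟩ := hcr.exists_isMaxOn ⟨_, mem_range_self 0⟩ hY.continuous.continuousOn
    have h3 := hpre (range γ) (Y (γ t)) (isPreconnected_range γ.continuous)
      ⟨0, γ.source⟩ ⟨1, γ.target⟩ (fun x hx' => hx hx')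
    have h4 : sSup A ≤ Y (γ t) := csSup_le ⟨a₀, ha₀⟩ h3
    have h5 : Y (γ t) < sSup A := aux_lt (hγ t)
    linarith
  refine ⟨⟨a₀, ha₀⟩, hbdd, ⟨h1, h2, hne⟩, ?_⟩
  obtain ⟨p, hp, hpne, hpn⟩ := aux_main hY hM hK h1 h2 hne (by
    intro b hb
    by_contra hcon
    have : b ∈ A := ⟨h1.trans hb, h2.trans hb, hcon⟩
    exact absurd (le_csSup hbdd this) (not_le.2 hb))
  exact ⟨_, ⟨p, hp, rfl⟩, hpne, hpn, fun z hz => aux_touch hY hM hpne.symm hz.1 hz.2⟩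

end helpers

/-- For a smooth Morse function `Y` bounded from below with `|∇Y| ≥ 1/C`
outside a compact set, and two distinct local minima `m ≠ m'`, the set
`A = {a | m, m' lie in two different connected components of {Y < a}}` is nonempty and
bounded above; with `σ = sup A`, the set `{Y < σ}` has two distinct connected components
`Ω ∋ m` and `Ω' ∋ m'`; and there is a connected component `Ω'' ≠ Ω` of `{Y < σ}` whose
closure meets the closure of `Ω`, every point of the intersection being a nondegenerate
critical point of `Y` of index `1` with critical value `σ`. -/
theorem stmt_3 (d' : ℕ) (hd' : 1 ≤ d') (C : ℝ) (hC : 0 < C)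
    (Y : EuclideanSpace ℝ (Fin d') → ℝ)
    (hY : ContDiff ℝ (⊤ : ℕ∞) Y)
    (hMorse : ∀ x, fderiv ℝ Y x = 0 → ∀ v, (∀ w, hessianAt Y x v w = 0) → v = 0)
    (hbdd : BddBelow (Set.range Y))
    (hgrad : ∀ x : EuclideanSpace ℝ (Fin d'), C < ‖x‖ → 1 / C ≤ ‖gradient Y x‖)
    (m m' : EuclideanSpace ℝ (Fin d')) (hmm' : m ≠ m')
    (hm : IsLocalMin Y m) (hm' : IsLocalMin Y m') :
    let A : Set ℝ := {a | Y m < a ∧ Y m' < a ∧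
      connectedComponentIn {y | Y y < a} m ≠ connectedComponentIn {y | Y y < a} m'}
    A.Nonempty ∧ BddAbove A ∧
    (Y m < sSup A ∧ Y m' < sSup A ∧
      connectedComponentIn {y | Y y < sSup A} m ≠ connectedComponentIn {y | Y y < sSup A} m') ∧
    (∃ Ω'' : Set (EuclideanSpace ℝ (Fin d')),
      (∃ p, Y p < sSup A ∧ Ω'' = connectedComponentIn {y | Y y < sSup A} p) ∧
      Ω'' ≠ connectedComponentIn {y | Y y < sSup A} m ∧
      (closure (connectedComponentIn {y | Y y < sSup A} m) ∩ closure Ω'').Nonempty ∧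
      (∀ z ∈ closure (connectedComponentIn {y | Y y < sSup A} m) ∩ closure Ω'',
        IsNondegenerateCriticalPt Y z ∧ HasMorseIndex Y z 1 ∧ Y z = sSup A)) := by
  refine aux_all hY hMorse (fun a => aux_compact hY hC hbdd (fun x hx => ?_) a) hmm' hm hm'
  have h := hgrad x hx
  rwa [gradient, LinearIsometryEquiv.norm_map] at h
end

section
/- Let d' ≥ 1 and let Y : ℝ^{d'} → ℝ be a smooth function all of whose critical points are nondegenerate. Let X ∈ ℝ^{d'} and suppose there exists r₀ > 0 such that for every neighborhood U of X contained in the ball B(X, r₀), the set U ∩ {Y < Y(X)} is not connected. Then X is a (nondegenerate) critical point of Y of index 1. -/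
open Set Filter Topology

lemma aux_preconn {E : Type*} [NormedAddCommGroup E] [NormedSpace ℝ E] {S A : Set E}
    (hA : IsPreconnected A) (hAS : A ⊆ S)
    (h : ∀ y ∈ S, ∃ a ∈ A, segment ℝ a y ⊆ S) : IsPreconnected S := by
  apply isPreconnected_of_forall_pair
  intro x hx y hy
  obtain ⟨a, ha, hax⟩ := h x hx
  obtain ⟨b, hb, hby⟩ := h y hy
  refine ⟨(segment ℝ a x ∪ A) ∪ segment ℝ b y, ?_, ?_, ?_, ?_⟩
  · exact union_subset (union_subset hax hAS) hby
  · exact Or.inl (Or.inl (right_mem_segment ℝ a x))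
  · exact Or.inr (right_mem_segment ℝ b y)
  · refine IsPreconnected.union b (Or.inr hb) (left_mem_segment ℝ b y) ?_
      (convex_segment b y).isPreconnected
    exact IsPreconnected.union a (left_mem_segment ℝ a x) ha
      (convex_segment a x).isPreconnected hA

section
variable {E : Type*} [NormedAddCommGroup E] [NormedSpace ℝ E]

lemma aux_d1 {Y : E → ℝ} (hY : Differentiable ℝ Y) (p v : E) (t : ℝ) :
    HasDerivAt (fun s : ℝ => Y (p + s • v)) (fderiv ℝ Y (p + t • v) v) t := by
  have h1 : HasDerivAt (fun s : ℝ => p + s • v) v t := by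
    simpa using ((hasDerivAt_id t).smul_const v).const_add p
  exact (hY (p + t • v)).hasFDerivAt.comp_hasDerivAt t h1

lemma aux_d2 {Y : E → ℝ} (hY : Differentiable ℝ (fderiv ℝ Y)) (p v : E) (t : ℝ) :
    HasDerivAt (fun s : ℝ => fderiv ℝ Y (p + s • v) v) (hessianAt Y (p + t • v) v v) t := by
  have h1 : HasDerivAt (fun s : ℝ => p + s • v) v t := by
    simpa using ((hasDerivAt_id t).smul_const v).const_add p
  have h2 := (hY (p + t • v)).hasFDerivAt.comp_hasDerivAt t h1
  exact h2.clm_apply (hasDerivAt_const t v) |>.congr_deriv (by simp [hessianAt])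

lemma aux_pos_nbhd [FiniteDimensional ℝ E] {F : E → E →L[ℝ] E →L[ℝ] ℝ} (hF : Continuous F)
    (X : E) (W : Submodule ℝ E) (h : ∀ v ∈ W, v ≠ 0 → 0 < F X v v) :
    ∀ᶠ y in 𝓝 X, ∀ v ∈ W, v ≠ 0 → 0 < F y v v := by
  have hK : IsCompact (Metric.sphere (0 : E) 1 ∩ (W : Set E)) :=
    (isCompact_sphere (0 : E) 1).inter_right W.closed_of_finiteDimensional
  have hev : ∀ᶠ y in 𝓝 X, ∀ v ∈ Metric.sphere (0 : E) 1 ∩ (W : Set E), 0 < F y v v := by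
    apply hK.eventually_forall_of_forall_eventually
    rintro v ⟨hv1, hvW⟩
    have hv0 : v ≠ 0 := by
      rintro rfl
      simp at hv1
    have hc : Continuous (fun z : E × E => F z.1 z.2 z.2) := by fun_prop
    exact (hc.tendsto (X, v)).eventually (lt_mem_nhds (h v hvW hv0))
  filter_upwards [hev] with y hy v hvW hv0
  have hn : 0 < ‖v‖ := norm_pos_iff.2 hv0
  have := hy (‖v‖⁻¹ • v) ⟨by simp [norm_smul, hn.ne'], W.smul_mem _ hvW⟩
  simp only [map_smul, smul_apply, smul_eq_mul] at this
  have h2 : 0 < ‖v‖⁻¹ := inv_pos.2 hn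
  exact pos_of_mul_pos_right (pos_of_mul_pos_right this h2.le) h2.le

lemma aux_decomp [FiniteDimensional ℝ E] (B : E →L[ℝ] E →L[ℝ] ℝ)
    (hs : ∀ v w, B v w = B w v) (hn : ∀ v, (∀ w, B v w = 0) → v = 0) :
    ∃ P : E →ₗ[ℝ] E, (∀ v, P (P v) = P v) ∧
      (∀ v ∈ LinearMap.range P, v ≠ 0 → B v v < 0) ∧
      (∀ v ∈ LinearMap.ker P, v ≠ 0 → 0 < B v v) := by
  let B' : LinearMap.BilinForm ℝ E := LinearMap.mk₂ ℝ (fun v w => B v w)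
    (by simp) (by simp) (by simp) (by simp)
  have hB' : ∀ v w, B' v w = B v w := fun v w => rfl
  let Q : QuadraticForm ℝ E := B'.toQuadraticMap
  have hQ : ∀ v, Q v = B v v := fun v => rfl
  have hass : QuadraticMap.associated (R := ℝ) Q = B' := by
    apply QuadraticMap.associated_left_inverse
    exact fun v w => hs v w
  obtain ⟨w, hw, ⟨e⟩⟩ := Q.equivalent_one_neg_one_weighted_sum_squared (by
    rw [hass]
    intro v hv
    exact hn v hv)
  have he : ∀ v, B v v = ∑ i, w i * (e v i * e v i) := by
    intro v
    rw [← hQ, ← e.map_app v, QuadraticMap.weightedSumSquares_apply]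
    simp
  let D : (Fin (Module.finrank ℝ E) → ℝ) →ₗ[ℝ] (Fin (Module.finrank ℝ E) → ℝ) :=
    LinearMap.pi fun i => (if w i = -1 then (1 : ℝ) else 0) • LinearMap.proj i
  have hD : ∀ x i, D x i = if w i = -1 then x i else 0 := by
    intro x i
    by_cases h : w i = -1 <;> simp [D, h]
  let P : E →ₗ[ℝ] E := e.toLinearEquiv.symm.toLinearMap ∘ₗ D ∘ₗ e.toLinearEquiv.toLinearMap
  have hP : ∀ v, e (P v) = D (e v) := by
    intro v
    exact e.toLinearEquiv.apply_symm_apply _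
  have hinj : Function.Injective e := e.toLinearEquiv.injective
  have hne : ∀ v, v ≠ 0 → ∃ i, e v i ≠ 0 := by
    intro v hv
    by_contra! hc
    apply hv
    apply e.toLinearEquiv.map_eq_zero_iff.1
    funext i
    exact hc i
  refine ⟨P, ?_, ?_, ?_⟩
  · intro v
    apply hinj
    rw [hP, hP]
    funext i
    simp only [hD]
    split_ifs <;> rfl
  · rintro v ⟨u, rfl⟩ hv
    obtain ⟨i, hi⟩ := hne _ hv
    rw [he]
    have hterm : ∀ j, w j * (e (P u) j * e (P u) j) = - (e (P u) j * e (P u) j) := by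
      intro j
      rw [hP, hD]
      split_ifs with h
      · rw [h]; ring
      · ring
    simp only [hterm, Finset.sum_neg_distrib]
    rw [neg_lt_zero]
    exact Finset.sum_pos' (fun j _ => mul_self_nonneg _) ⟨i, Finset.mem_univ _, mul_self_pos.2 hi⟩
  · intro v hv hv0
    obtain ⟨i, hi⟩ := hne _ hv0
    have hz : ∀ j, w j = -1 → e v j = 0 := by
      intro j hj
      have h1 : e (P v) j = 0 := by
        rw [LinearMap.mem_ker.1 hv]
        exact congrFun e.toLinearEquiv.map_zero j
      rw [hP, hD, if_pos hj] at h1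
      exact h1
    rw [he]
    have hterm : ∀ j, w j * (e v j * e v j) = e v j * e v j := by
      intro j
      rcases hw j with h | h
      · simp [hz j h]
      · rw [h, one_mul]
    simp only [hterm]
    exact Finset.sum_pos' (fun j _ => mul_self_nonneg _) ⟨i, Finset.mem_univ _, mul_self_pos.2 hi⟩

/-- Noncritical points. -/
lemma aux_noncrit_s5 {Y : E → ℝ} (hY : Differentiable ℝ Y) (hc : Continuous (fderiv ℝ Y))
    (X : E) (hX : fderiv ℝ Y X ≠ 0) {r : ℝ} (hr : 0 < r) :
    ∃ U ∈ 𝓝 X, U ⊆ Metric.ball X r ∧ IsPreconnected (U ∩ {y | Y y < Y X}) := by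
  obtain ⟨v, hv⟩ : ∃ v, fderiv ℝ Y X v < 0 := by
    by_contra! h
    apply hX
    ext v
    have h1 := h v
    have h2 := h (-v)
    simp only [map_neg] at h2
    simp only [zero_apply]
    linarith
  have hcv : Continuous (fun y => fderiv ℝ Y y v) := by fun_prop
  have hev : ∀ᶠ y in 𝓝 X, fderiv ℝ Y y v < 0 := (hcv.tendsto X).eventually (gt_mem_nhds hv)
  obtain ⟨ρ, hρ, hρv⟩ := Metric.eventually_nhds_iff_ball.1 hev
  set m := min ρ r with hm
  have hm0 : 0 < m := lt_min hρ hr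
  -- the length of the cylinder
  set T : ℝ := m / (2 * (‖v‖ + 1)) with hT
  have hT0 : 0 < T := by positivity
  have hTv : T * ‖v‖ < m / 2 := by
    have : T * (‖v‖ + 1) = m / 2 := by rw [hT]; field_simp
    nlinarith
  have hin : ∀ x ∈ Metric.ball X (m / 2), ∀ t ∈ Icc 0 T, x + t • v ∈ Metric.ball X m := by
    intro x hx t ht
    rw [Metric.mem_ball, dist_eq_norm] at hx ⊢
    calc ‖x + t • v - X‖ = ‖(x - X) + t • v‖ := by congr 1; abel
      _ ≤ ‖x - X‖ + ‖t • v‖ := norm_add_le _ _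
      _ = ‖x - X‖ + t * ‖v‖ := by rw [norm_smul, Real.norm_of_nonneg ht.1]
      _ ≤ ‖x - X‖ + T * ‖v‖ := by gcongr; exact ht.2
      _ < m := by linarith
  have hanti : ∀ x ∈ Metric.ball X (m / 2), StrictAntiOn (fun t : ℝ => Y (x + t • v)) (Icc 0 T) := by
    intro x hx
    apply strictAntiOn_of_deriv_neg (convex_Icc 0 T)
    · exact fun t _ => (aux_d1 hY x v t).continuousAt.continuousWithinAt
    · intro t ht
      rw [(aux_d1 hY x v t).deriv]
      rw [interior_Icc] at ht
      exact hρv _ (Metric.ball_subset_ball (min_le_left _ _) (hin x hx t ⟨ht.1.le, ht.2.le⟩))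
  have hXT : Y (X + T • v) < Y X := by
    have := hanti X (Metric.mem_ball_self (by positivity)) (left_mem_Icc.2 hT0.le)
      (right_mem_Icc.2 hT0.le) hT0
    simpa using this
  have hcT : Continuous (fun x => Y (x + T • v)) := by
    have := hY.continuous
    fun_prop
  have hev2 : ∀ᶠ x in 𝓝 X, Y (x + T • v) < Y X := (hcT.tendsto X).eventually (gt_mem_nhds hXT)
  obtain ⟨δ', hδ', hδv⟩ := Metric.eventually_nhds_iff_ball.1 hev2
  set δ := min δ' (m / 2) with hδ
  have hδ0 : 0 < δ := lt_min hδ' (by positivity)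
  have hsub : Metric.ball X δ ⊆ Metric.ball X (m / 2) := Metric.ball_subset_ball (min_le_right _ _)
  refine ⟨{y | ∃ x ∈ Metric.ball X δ, ∃ t ∈ Icc 0 T, y = x + t • v}, ?_, ?_, ?_⟩
  · refine mem_of_superset (Metric.ball_mem_nhds X hδ0) fun x hx => ?_
    exact ⟨x, hx, 0, left_mem_Icc.2 hT0.le, by simp⟩
  · rintro _ ⟨x, hx, t, ht, rfl⟩
    exact Metric.ball_subset_ball (min_le_right _ _) (hin x (hsub hx) t ht)
  · apply aux_preconn (A := (fun x => x + T • v) '' Metric.ball X δ)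
    · exact (convex_ball X δ).isPreconnected.image _ (by fun_prop)
    · rintro _ ⟨x, hx, rfl⟩
      exact ⟨⟨x, hx, T, right_mem_Icc.2 hT0.le, rfl⟩,
        hδv x (Metric.ball_subset_ball (min_le_left _ _) hx)⟩
    · rintro _ ⟨⟨x, hx, t, ht, rfl⟩, hlt⟩
      refine ⟨x + T • v, ⟨x, hx, rfl⟩, ?_⟩
      rintro _ ⟨a, b, ha, hb, hab, rfl⟩
      have heq : a • (x + T • v) + b • (x + t • v) = x + (a * T + b * t) • v := by
        have : x = (a + b) • x := by rw [hab, one_smul]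
        nth_rewrite 3 [this]
        module
      have hb' : b = 1 - a := by linarith
      have htle : t ≤ a * T + b * t := by
        subst hb'
        nlinarith [ht.2]
      have hleT : a * T + b * t ≤ T := by
        subst hb'
        nlinarith [ht.2]
      have hmem : a * T + b * t ∈ Icc 0 T := ⟨ht.1.trans htle, hleT⟩
      rw [heq]
      refine ⟨⟨x, hx, _, hmem, rfl⟩, ?_⟩
      have := (hanti x (hsub hx)).antitoneOn ht hmem htle
      exact lt_of_le_of_lt this hlt

/-- Critical points. -/
lemma aux_crit [FiniteDimensional ℝ E] {Y : E → ℝ} (hY : Differentiable ℝ Y)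
    (hY' : Differentiable ℝ (fderiv ℝ Y)) (hc : Continuous (hessianAt Y))
    (X : E) (hX : fderiv ℝ Y X = 0) {r : ℝ} (hr : 0 < r)
    (P : E →ₗ[ℝ] E) (hPP : ∀ v, P (P v) = P v)
    (hneg : ∀ v ∈ LinearMap.range P, v ≠ 0 → hessianAt Y X v v < 0)
    (hpos : ∀ v ∈ LinearMap.ker P, v ≠ 0 → 0 < hessianAt Y X v v)
    (hdim : Module.finrank ℝ (LinearMap.range P) ≠ 1) :
    ∃ U ∈ 𝓝 X, U ⊆ Metric.ball X r ∧ IsPreconnected (U ∩ {y | Y y < Y X}) := by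
  have hev1 := aux_pos_nbhd hc X _ hpos
  have hcn : Continuous (fun y => - hessianAt Y y) :=
    (LinearIsometryEquiv.neg ℝ (E := E →L[ℝ] E →L[ℝ] ℝ)).continuous.comp hc
  have hev2 := aux_pos_nbhd (F := fun y => - hessianAt Y y) hcn X (LinearMap.range P)
    (fun v hv h0 => by simpa using hneg v hv h0)
  obtain ⟨ρ, hρ, hρv⟩ := Metric.eventually_nhds_iff_ball.1 (hev1.and hev2)
  set m := min ρ r with hm
  have hm0 : 0 < m := lt_min hρ hr
  have hmρ : Metric.ball X m ⊆ Metric.ball X ρ := Metric.ball_subset_ball (min_le_left _ _)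
  have hPc : Continuous P := P.continuous_of_finiteDimensional
  have hPker : ∀ u, u - P u ∈ LinearMap.ker P := by
    intro u
    rw [LinearMap.mem_ker, map_sub, hPP, sub_self]
  have hin : ∀ a b : E, ‖a‖ + ‖b‖ < m → X + a + b ∈ Metric.ball X m := by
    intro a b hab
    rw [Metric.mem_ball, dist_eq_norm]
    calc ‖X + a + b - X‖ = ‖a + b‖ := by congr 1; abel
      _ ≤ ‖a‖ + ‖b‖ := norm_add_le _ _
      _ < m := hab
  -- downward along the negative directions
  have hdown : ∀ a ∈ LinearMap.range P, a ≠ 0 → ‖a‖ < m → Y (X + a) < Y X := by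
    intro a ha ha0 ham
    have hmem : ∀ t ∈ Icc (0 : ℝ) 1, X + t • a ∈ Metric.ball X ρ := by
      intro t ht
      have := hin (t • a) 0 (by
        rw [norm_zero, add_zero, norm_smul, Real.norm_of_nonneg ht.1]
        nlinarith [ht.2, norm_nonneg a])
      rw [add_zero] at this
      exact hmρ this
    have h1 : StrictAntiOn (fun t : ℝ => fderiv ℝ Y (X + t • a) a) (Icc 0 1) := by
      apply strictAntiOn_of_deriv_neg (convex_Icc 0 1)
      · exact fun t _ => (aux_d2 hY' X a t).continuousAt.continuousWithinAt
      · intro t ht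
        rw [(aux_d2 hY' X a t).deriv]
        have := (hρv _ (hmem t (interior_subset ht))).2 a ha ha0
        simpa using this
    have h2 : StrictAntiOn (fun t : ℝ => Y (X + t • a)) (Icc 0 1) := by
      apply strictAntiOn_of_deriv_neg (convex_Icc 0 1)
      · exact fun t _ => (aux_d1 hY X a t).continuousAt.continuousWithinAt
      · intro t ht
        rw [(aux_d1 hY X a t).deriv]
        have h0 : (0 : ℝ) < t := by
          rw [interior_Icc] at ht
          exact ht.1
        have := h1 (left_mem_Icc.2 zero_le_one) (interior_subset ht) h0
        simpa [hX] using this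
    have := h2 (left_mem_Icc.2 zero_le_one) (right_mem_Icc.2 zero_le_one) zero_lt_one
    simpa using this
  -- convex along the positive directions
  have hconv : ∀ a b : E, b ∈ LinearMap.ker P → ‖a‖ + ‖b‖ < m →
      MonotoneOn (fun t : ℝ => fderiv ℝ Y (X + a + t • b) b) (Icc 0 1) := by
    intro a b hb hab
    apply monotoneOn_of_deriv_nonneg (convex_Icc 0 1)
    · exact fun t _ => (aux_d2 hY' (X + a) b t).continuousAt.continuousWithinAt
    · exact fun t _ => (aux_d2 hY' (X + a) b t).differentiableAt.differentiableWithinAt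
    · intro t ht
      have ht' := interior_subset ht
      rw [(aux_d2 hY' (X + a) b t).deriv]
      have hmem : X + a + t • b ∈ Metric.ball X ρ := by
        apply hmρ
        apply hin
        rw [norm_smul, Real.norm_of_nonneg ht'.1]
        nlinarith [ht'.2, norm_nonneg b]
      by_cases hb0 : b = 0
      · simp [hb0]
      · exact ((hρv _ hmem).1 b hb hb0).le
  have hup : ∀ b ∈ LinearMap.ker P, ‖b‖ < m → Y X ≤ Y (X + b) := by
    intro b hb hbm
    have h1 := hconv 0 b hb (by simpa using hbm)
    have h2 : MonotoneOn (fun t : ℝ => Y (X + 0 + t • b)) (Icc 0 1) := by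
      apply monotoneOn_of_deriv_nonneg (convex_Icc 0 1)
      · exact fun t _ => (aux_d1 hY (X + 0) b t).continuousAt.continuousWithinAt
      · exact fun t _ => (aux_d1 hY (X + 0) b t).differentiableAt.differentiableWithinAt
      · intro t ht
        rw [(aux_d1 hY (X + 0) b t).deriv]
        have ht' := interior_subset ht
        have := h1 (left_mem_Icc.2 zero_le_one) ht' ht'.1
        simpa [hX] using this
    have := h2 (left_mem_Icc.2 zero_le_one) (right_mem_Icc.2 zero_le_one) zero_le_one
    simpa using this
  have hseg : ∀ a b : E, b ∈ LinearMap.ker P → ‖a‖ + ‖b‖ < m → Y (X + a) < Y X →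
      Y (X + a + b) < Y X → ∀ t ∈ Icc (0 : ℝ) 1, Y (X + a + t • b) < Y X := by
    intro a b hb hab h0 h1 t ht
    have hcv : ConvexOn ℝ (Icc (0 : ℝ) 1) (fun t : ℝ => Y (X + a + t • b)) := by
      apply MonotoneOn.convexOn_of_deriv (convex_Icc 0 1)
      · exact fun t _ => (aux_d1 hY (X + a) b t).continuousAt.continuousWithinAt
      · exact fun t _ => (aux_d1 hY (X + a) b t).differentiableAt.differentiableWithinAt
      · have : deriv (fun t : ℝ => Y (X + a + t • b)) =
            fun t : ℝ => fderiv ℝ Y (X + a + t • b) b := by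
          funext t
          exact (aux_d1 hY (X + a) b t).deriv
        rw [this]
        exact (hconv a b hb hab).mono interior_subset
    have := hcv.le_max_of_mem_Icc (left_mem_Icc.2 zero_le_one) (right_mem_Icc.2 zero_le_one) ht
    refine lt_of_le_of_lt this (max_lt ?_ ?_)
    · simpa using h0
    · simpa using h1
  refine ⟨{y | ‖P (y - X)‖ + ‖(y - X) - P (y - X)‖ < m}, ?_, ?_, ?_⟩
  · apply IsOpen.mem_nhds
    · exact isOpen_lt (by fun_prop) continuous_const
    · simpa using hm0
  · intro y hy
    have := hin _ _ hy
    refine Metric.ball_subset_ball (min_le_right ρ r) ?_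
    convert this using 1
    abel
  · apply aux_preconn (A := {y | ∃ a ∈ LinearMap.range P, a ≠ 0 ∧ ‖a‖ < m ∧ y = X + a})
    · by_cases h0 : Module.finrank ℝ (LinearMap.range P) = 0
      · convert isPreconnected_empty
        rw [Set.eq_empty_iff_forall_notMem]
        rintro _ ⟨a, ha, ha0, -⟩
        rw [Submodule.finrank_eq_zero.1 h0] at ha
        exact ha0 (by simpa using ha)
      · have hrk : 1 < Module.rank ℝ (LinearMap.range P) := by
          rw [← Module.finrank_eq_rank]
          exact_mod_cast (by omega : 1 < Module.finrank ℝ (LinearMap.range P))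
        have hsph := isPreconnected_sphere hrk 0 1
        have himg := (hsph.prod (isPreconnected_Ioo (a := (0 : ℝ)) (b := m))).image
          (fun z => X + z.2 • (z.1 : E)) (by fun_prop)
        convert himg using 1
        ext y
        constructor
        · rintro ⟨a, ha, ha0, ham, rfl⟩
          have hn : 0 < ‖a‖ := norm_pos_iff.2 ha0
          refine ⟨(⟨‖a‖⁻¹ • a, Submodule.smul_mem _ _ ha⟩, ‖a‖), ⟨?_, hn, ham⟩, ?_⟩
          · simp [norm_smul, hn.ne']
          · simp [smul_smul, hn.ne']
        · rintro ⟨⟨u, t⟩, ⟨hu, ht0, htm⟩, rfl⟩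
          have hu1 : ‖(u : E)‖ = 1 := by simpa using hu
          simp only at ht0 htm
          refine ⟨t • (u : E), Submodule.smul_mem _ _ u.2, ?_, ?_, rfl⟩
          · intro h
            have := congrArg norm h
            rw [norm_smul, hu1, Real.norm_of_nonneg ht0.le, norm_zero] at this
            linarith
          · rw [norm_smul, hu1, Real.norm_of_nonneg ht0.le]
            linarith
    · rintro _ ⟨a, ha, ha0, ham, rfl⟩
      refine ⟨?_, hdown a ha ha0 ham⟩
      obtain ⟨u, rfl⟩ := ha
      simpa [hPP] using ham
    · rintro y ⟨hyU, hlt⟩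
      set a := P (y - X) with ha
      set b := (y - X) - P (y - X) with hb
      have hab : ‖a‖ + ‖b‖ < m := hyU
      have hbk : b ∈ LinearMap.ker P := hPker _
      have hPa : P a = a := hPP _
      have hPb : P b = 0 := hbk
      have hyab : y = X + a + b := by rw [hb, ha]; abel
      clear_value a b
      subst hyab
      have har : a ∈ LinearMap.range P := ⟨a, hPa⟩
      have ham : ‖a‖ < m := by linarith [norm_nonneg b]
      have ha0 : a ≠ 0 := by
        rintro rfl
        have := hup b hbk (by linarith [norm_nonneg (0 : E)])
        simp only [add_zero, mem_ofPred_eq] at hlt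
        linarith
      refine ⟨X + a, ⟨a, har, ha0, ham, rfl⟩, ?_⟩
      rintro _ ⟨s, t, hs, ht, hst, rfl⟩
      have heq : s • (X + a) + t • (X + a + b) = X + a + t • b := by
        have : X + a = (s + t) • (X + a) := by rw [hst, one_smul]
        nth_rewrite 3 [this]
        module
      rw [heq]
      refine ⟨?_, hseg a b hbk hab (hdown a har ha0 ham) hlt t ⟨ht, by linarith⟩⟩
      have h3 : X + a + t • b - X = a + t • b := by abel
      have h4 : P (a + t • b) = a := by simp [hPa, hPb]
      simp only [mem_ofPred_eq, h3, h4, add_sub_cancel_left]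
      rw [norm_smul, Real.norm_of_nonneg ht]
      nlinarith [norm_nonneg b]

end


/-- Let `Y : ℝ^{d'} → ℝ` be smooth with all critical points nondegenerate.
If there exists `r₀ > 0` such that for every neighborhood `U` of `X` contained in `B(X, r₀)`
the set `U ∩ {Y < Y(X)}` is not connected, then `X` is a nondegenerate critical point of `Y`
of index `1`. -/
theorem stmt_5 (d' : ℕ) (hd' : 1 ≤ d')
    (Y : EuclideanSpace ℝ (Fin d') → ℝ) (hY : ContDiff ℝ (⊤ : ℕ∞) Y)
    (hMorse : ∀ x, fderiv ℝ Y x = 0 → ∀ v, (∀ w, hessianAt Y x v w = 0) → v = 0)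
    (X : EuclideanSpace ℝ (Fin d'))
    (r₀ : ℝ) (hr₀ : 0 < r₀)
    (hdisc : ∀ U : Set (EuclideanSpace ℝ (Fin d')),
      U ∈ nhds X → U ⊆ Metric.ball X r₀ → ¬ IsPreconnected (U ∩ {y | Y y < Y X})) :
    IsNondegenerateCriticalPt Y X ∧ HasMorseIndex Y X 1 := by
  have hd1 : Differentiable ℝ Y := hY.differentiable (by simp)
  have hf1 : ContDiff ℝ 1 (fderiv ℝ Y) := hY.fderiv_right (by norm_cast)
  have hd2 : Differentiable ℝ (fderiv ℝ Y) := hf1.differentiable (by simp)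
  have hc2 : Continuous (hessianAt Y) := hf1.continuous_fderiv (by simp)
  have hcrit : fderiv ℝ Y X = 0 := by
    by_contra h
    obtain ⟨U, hU, hUr, hUc⟩ := aux_noncrit_s5 hd1 hd2.continuous X h hr₀
    exact hdisc U hU hUr hUc
  have hsymm : ∀ v w, hessianAt Y X v w = hessianAt Y X w v := by
    have h : IsSymmSndFDerivAt ℝ Y X :=
      (hY.contDiffAt (x := X)).isSymmSndFDerivAt (by simp; norm_cast)
    exact fun v w => h.eq v w
  obtain ⟨P, hPP, hneg, hpos⟩ := aux_decomp (hessianAt Y X) hsymm (hMorse X hcrit)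
  have hdim : Module.finrank ℝ (LinearMap.range P) = 1 := by
    by_contra h
    obtain ⟨U, hU, hUr, hUc⟩ := aux_crit hd1 hd2 hc2 X hcrit hr₀ P hPP hneg hpos h
    exact hdisc U hU hUr hUc
  refine ⟨⟨hcrit, hMorse X hcrit⟩, ⟨LinearMap.range P, hdim, hneg⟩, ?_⟩
  intro W hW
  have hdisj : Disjoint W (LinearMap.ker P) := by
    rw [Submodule.disjoint_def]
    intro v hv1 hv2
    by_contra hv0
    exact lt_asymm (hW v hv1 hv0) (hpos v hv2 hv0)
  have h1 := Submodule.finrank_add_finrank_le_of_disjoint hdisj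
  have h2 := P.finrank_range_add_finrank_ker
  omega
end
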